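/- Fix λ ∈ (0,1) and a ≥ 0 such that α := (1 + λ − 2a(1−λ))/2 > 0. Let (𝗎ₙ) be generated by the general momentum method, and let u ∈ C⁴([0,∞); ℝ^d) solve the modified (damped Hamiltonian) equation h α ü + (1−λ) u̇ = −∇Φ(u) with u(0) = 𝗎₀ and u̇(0) = 𝗎₀′ for an arbitrary 𝗎₀′ ∈ ℝ^d. Suppose h ≤ (1−λ)²/(2αB₁). Then for every T ≥ 0 there is a constant C = C(T) > 0, independent of h, such that sup over all n with 0 ≤ nh ≤ T of |u(nh) − 𝗎ₙ| ≤ C h. -/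

import Mathlib

/-!
Integrating `μ ü + γ u̇ = f(u)` once shows that the integrated momentum `μ u̇ + γ u` has
derivative `f(u)`. With `γ = 1 - λ`, its discrete counterpart `xₙ₊₁ - λ xₙ` increases by `h f(yₙ)`
at each step, where `yₙ` is the look-ahead point. The difference of the two, the momentum defect,
therefore obeys an Euler-type recursion, and discrete Grönwall applies to it. A common bound on the
speeds of both motions, available because `f` is bounded and the friction dissipates, makes
`(1 - λ) (u(nh) - xₙ)` equal to the defect up to `O(μ + h)`. When `μ = h α`, the initial defect and
the errors accumulated over a bounded time are all `O(h)`.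
-/

open Set
open scoped NNReal

theorem lipschitzWith_gradient_of_norm_fderiv_le {F : Type*} [NormedAddCommGroup F]
    [InnerProductSpace ℝ F] [CompleteSpace F] {Φ : F → ℝ} {K : ℝ≥0} (hΦ : ContDiff ℝ 2 Φ)
    (hK : ∀ x, ‖fderiv ℝ (gradient Φ) x‖ ≤ K) : LipschitzWith K (gradient Φ) := by
  have hfderiv : Differentiable ℝ (fderiv ℝ Φ) :=
    (hΦ.fderiv_right (m := 1) (by norm_num)).differentiable one_ne_zero
  exact lipschitzWith_of_nnnorm_fderiv_le
    ((InnerProductSpace.toDual ℝ F).symm.toContinuousLinearEquiv.differentiable.comp hfderiv) hK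

section MomentumMethod

variable {E : Type*} [NormedAddCommGroup E] [NormedSpace ℝ E] {f : E → E} {K : ℝ≥0}
  {lam a h μ γ V : ℝ} {x : ℕ → E} {u v : ℝ → E}

/-- The general momentum method with force `f`, momentum parameter `lam`, look-ahead `a` and
learning rate `h`, started with an explicit Euler step. Heavy ball is `a = 0`, Nesterov's method
is `a = lam`. -/
structure IsMomentumSequence (f : E → E) (lam a h : ℝ) (x : ℕ → E) : Prop where
  one : x 1 = x 0 + h • f (x 0)
  add_two (n : ℕ) : x (n + 2) = x (n + 1) + lam • (x (n + 1) - x n)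
    + h • f (x (n + 1) + a • (x (n + 1) - x n))

/-- The damped motion `μ ü + γ u̇ = f(u)` on `[0, ∞)`, with position `u` and velocity `v`. The
second equation differentiates `μ v` instead of dividing by the mass `μ`, so that `μ = 0` is the
overdamped equation `γ u̇ = f(u)`. -/
structure IsDampedMotion (f : E → E) (μ γ : ℝ) (u v : ℝ → E) : Prop where
  hasDerivWithinAt_position (t : ℝ) (ht : t ∈ Ici 0) : HasDerivWithinAt u (v t) (Ici 0) t
  hasDerivWithinAt_momentum (t : ℝ) (ht : t ∈ Ici 0) :
    HasDerivWithinAt (fun s ↦ μ • v s) (f (u t) - γ • v t) (Ici 0) t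

/-- The first integral in time of the left-hand side of `μ ü + γ u̇ = f(u)`, where `v = u̇`. -/
def integratedMomentum (μ γ : ℝ) (u v : ℝ → E) (t : ℝ) : E :=
  μ • v t + γ • u t

/-- The integrated momentum of a motion with friction `1 - lam` at time `n h`, minus its discrete
counterpart `xₙ₊₁ - lam xₙ` for the iterates. -/
def momentumDefect (μ lam h : ℝ) (u v : ℝ → E) (x : ℕ → E) (n : ℕ) : E :=
  integratedMomentum μ (1 - lam) u v (n * h) - (x (n + 1) - lam • x n)

namespace IsMomentumSequence

theorem norm_succ_sub_le (hx : IsMomentumSequence f lam a h x) (hh : 0 ≤ h) (hV : 0 ≤ V)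
    (hf : ∀ z, ‖f z‖ ≤ (1 - |lam|) * V) (n : ℕ) : ‖x (n + 1) - x n‖ ≤ h * V := by
  induction n with
  | zero =>
    have hfV : ‖f (x 0)‖ ≤ V :=
      (hf _).trans (mul_le_of_le_one_left hV (by linarith [abs_nonneg lam]))
    rw [zero_add, hx.one, add_sub_cancel_left, norm_smul, Real.norm_of_nonneg hh]
    gcongr
  | succ n ih =>
    rw [hx.add_two, add_assoc, add_sub_cancel_left]
    calc ‖lam • (x (n + 1) - x n) + h • f (x (n + 1) + a • (x (n + 1) - x n))‖
        ≤ |lam| * ‖x (n + 1) - x n‖ + h * ‖f (x (n + 1) + a • (x (n + 1) - x n))‖ := by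
          refine (norm_add_le _ _).trans_eq ?_
          rw [norm_smul, norm_smul, Real.norm_eq_abs, Real.norm_of_nonneg hh]
      _ ≤ |lam| * (h * V) + h * ((1 - |lam|) * V) := by gcongr; exact hf _
      _ = h * V := by ring

theorem momentumDefect_succ (hx : IsMomentumSequence f lam a h x) (μ : ℝ) (u v : ℝ → E) (n : ℕ) :
    momentumDefect μ lam h u v x (n + 1) = momentumDefect μ lam h u v x n
      + (integratedMomentum μ (1 - lam) u v (n * h + h) - integratedMomentum μ (1 - lam) u v (n * h)
        - h • f (x (n + 1) + a • (x (n + 1) - x n))) := by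
  rw [momentumDefect, momentumDefect, hx.add_two, Nat.cast_succ, add_one_mul]
  module

end IsMomentumSequence

namespace IsDampedMotion

theorem of_hasDerivAt (hμ : μ ≠ 0) (hu : ∀ t, HasDerivAt u (v t) t)
    (hv : ∀ t, HasDerivAt v (μ⁻¹ • (f (u t) - γ • v t)) t) : IsDampedMotion f μ γ u v where
  hasDerivWithinAt_position t _ := (hu t).hasDerivWithinAt
  hasDerivWithinAt_momentum t _ := by
    exact ((hv t).const_smul μ).hasDerivWithinAt.congr_deriv (smul_inv_smul₀ hμ _)

theorem hasDerivWithinAt_integratedMomentum (hu : IsDampedMotion f μ γ u v) {t : ℝ}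
    (ht : t ∈ Ici 0) : HasDerivWithinAt (integratedMomentum μ γ u v) (f (u t)) (Ici 0) t :=
  ((hu.hasDerivWithinAt_momentum t ht).add
    ((hu.hasDerivWithinAt_position t ht).const_smul γ)).congr_deriv (sub_add_cancel _ _)

theorem smul_velocity_of_mass_zero (hu : IsDampedMotion f 0 γ u v) {t : ℝ} (ht : t ∈ Ici 0) :
    γ • v t = f (u t) := by
  have hzero : HasDerivWithinAt (fun s ↦ (0 : ℝ) • v s) 0 (Ici 0) t := by
    simpa only [zero_smul] using hasDerivWithinAt_const t (Ici 0) (0 : E)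
  exact (sub_eq_zero.1 ((uniqueDiffOn_Ici 0 t ht).eq_deriv _
    (hu.hasDerivWithinAt_momentum t ht) hzero)).symm

-- The integrating factor `exp (γ t / μ)` removes the friction from the momentum equation.
theorem hasDerivWithinAt_exp_smul_momentum (hu : IsDampedMotion f μ γ u v) (hμ : μ ≠ 0) {t : ℝ}
    (ht : t ∈ Ici 0) :
    HasDerivWithinAt (fun s ↦ Real.exp (γ / μ * s) • μ • v s) (Real.exp (γ / μ * t) • f (u t))
      (Ici 0) t := by
  have hexp := ((hasDerivAt_id t).const_mul (γ / μ)).exp.hasDerivWithinAt (s := Ici 0)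
  refine (hexp.smul (hu.hasDerivWithinAt_momentum t ht)).congr_deriv ?_
  simp only [id_eq, mul_one, mul_smul, ← smul_add, smul_smul (γ / μ), div_mul_cancel₀ γ hμ,
    sub_add_cancel]

theorem norm_velocity_le (hu : IsDampedMotion f μ γ u v) (hμ : 0 ≤ μ) (hγ : 0 < γ)
    (hf : ∀ z, ‖f z‖ ≤ γ * V) (hv : ‖v 0‖ ≤ V) {t : ℝ} (ht : t ∈ Ici 0) : ‖v t‖ ≤ V := by
  rcases hμ.eq_or_lt with rfl | hμ
  · refine le_of_mul_le_mul_left ?_ hγ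
    rw [← Real.norm_of_nonneg hγ.le, ← norm_smul, hu.smul_velocity_of_mass_zero ht,
      Real.norm_of_nonneg hγ.le]
    exact hf _
  have hderiv {s : ℝ} (hs : s ∈ Ici 0) := hu.hasDerivWithinAt_exp_smul_momentum hμ.ne' hs
  have hbarrier (s : ℝ) : HasDerivAt (fun s ↦ Real.exp (γ / μ * s) * (μ * V))
      (Real.exp (γ / μ * s) * (γ * V)) s := by
    refine (((hasDerivAt_id s).const_mul (γ / μ)).exp.mul_const (μ * V)).congr_deriv ?_
    simp only [id_eq]
    field_simp
  have hexp : ‖Real.exp (γ / μ * t) • μ • v t‖ ≤ Real.exp (γ / μ * t) * (μ * V) := by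
    refine image_norm_le_of_norm_deriv_right_le_deriv_boundary (a := 0) (b := t)
      (fun s hs ↦ (hderiv hs.1).continuousWithinAt.mono Icc_subset_Ici_self)
      (fun s hs ↦ (hderiv hs.1).mono (Ici_subset_Ici.2 hs.1)) ?_ hbarrier (fun s _ ↦ ?_)
      (right_mem_Icc.2 ht)
    · rw [mul_zero, Real.exp_zero, one_smul, one_mul, norm_smul, Real.norm_of_nonneg hμ.le]
      gcongr
    · rw [norm_smul, Real.norm_of_nonneg (Real.exp_pos _).le]
      gcongr
      exact hf _
  rw [norm_smul, norm_smul, Real.norm_of_nonneg (Real.exp_pos _).le, Real.norm_of_nonneg hμ.le]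
    at hexp
  exact le_of_mul_le_mul_left (le_of_mul_le_mul_left hexp (Real.exp_pos _)) hμ

theorem norm_position_sub_le (hu : IsDampedMotion f μ γ u v) (hv : ∀ t ∈ Ici 0, ‖v t‖ ≤ V)
    {s t : ℝ} (hs : 0 ≤ s) (hst : s ≤ t) : ‖u t - u s‖ ≤ V * (t - s) := by
  simpa only [Real.norm_of_nonneg (sub_nonneg.2 hst)] using
    (convex_Ici (0 : ℝ)).norm_image_sub_le_of_norm_hasDerivWithin_le
      hu.hasDerivWithinAt_position hv hs (hs.trans hst)

theorem norm_integratedMomentum_sub_sub_le (hu : IsDampedMotion f μ γ u v) (hh : 0 ≤ h) {t R : ℝ}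
    (ht : 0 ≤ t) {w : E} (hR : ∀ s ∈ Ico t (t + h), ‖f (u s) - w‖ ≤ R) :
    ‖integratedMomentum μ γ u v (t + h) - integratedMomentum μ γ u v t - h • w‖ ≤ R * h := by
  have hderiv (s : ℝ) (hs : s ∈ Icc t (t + h)) : HasDerivWithinAt
      (fun s ↦ integratedMomentum μ γ u v s - s • w) (f (u s) - w) (Icc t (t + h)) s := by
    have hlinear := (hasDerivWithinAt_id s (Icc t (t + h))).smul_const w
    rw [one_smul] at hlinear
    exact ((hu.hasDerivWithinAt_integratedMomentum (ht.trans hs.1)).mono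
      fun r hr ↦ ht.trans hr.1).sub hlinear
  have hmean := norm_image_sub_le_of_norm_deriv_le_segment' hderiv hR (t + h)
    (right_mem_Icc.2 (le_add_of_nonneg_right hh))
  convert hmean using 2
  · module
  · ring

end IsDampedMotion

theorem norm_sub_le_norm_momentumDefect (hμ : 0 ≤ μ) (hlam : lam < 1) {n : ℕ}
    (hx : ‖x (n + 1) - x n‖ ≤ h * V) (hv : ‖v (n * h)‖ ≤ V) :
    (1 - lam) * ‖u (n * h) - x n‖ ≤ ‖momentumDefect μ lam h u v x n‖ + (μ + h) * V := by
  have hsplit : (1 - lam) • (u (n * h) - x n)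
      = momentumDefect μ lam h u v x n - μ • v (n * h) + (x (n + 1) - x n) := by
    rw [momentumDefect, integratedMomentum]
    module
  calc (1 - lam) * ‖u (n * h) - x n‖ = ‖(1 - lam) • (u (n * h) - x n)‖ := by
        rw [norm_smul, Real.norm_of_nonneg (sub_nonneg.2 hlam.le)]
    _ ≤ ‖momentumDefect μ lam h u v x n‖ + μ * ‖v (n * h)‖ + ‖x (n + 1) - x n‖ := by
        rw [hsplit]
        refine (norm_add_le _ _).trans (add_le_add_left ((norm_sub_le _ _).trans_eq ?_) _)
        rw [norm_smul, Real.norm_of_nonneg hμ]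
    _ ≤ ‖momentumDefect μ lam h u v x n‖ + μ * V + h * V := by gcongr
    _ = ‖momentumDefect μ lam h u v x n‖ + (μ + h) * V := by ring

theorem norm_momentumDefect_zero_le (hμ : 0 ≤ μ) (hux : u 0 = x 0) (hx : ‖x 1 - x 0‖ ≤ h * V)
    (hv : ‖v 0‖ ≤ V) : ‖momentumDefect μ lam h u v x 0‖ ≤ (μ + h) * V := by
  have hsplit : momentumDefect μ lam h u v x 0 = μ • v 0 - (x 1 - x 0) := by
    rw [momentumDefect, integratedMomentum, zero_add, Nat.cast_zero, zero_mul, hux]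
    module
  calc ‖momentumDefect μ lam h u v x 0‖ ≤ μ * ‖v 0‖ + ‖x 1 - x 0‖ := by
        rw [hsplit, ← Real.norm_of_nonneg hμ, ← norm_smul, Real.norm_of_nonneg hμ]
        exact norm_sub_le _ _
    _ ≤ μ * V + h * V := by gcongr
    _ = (μ + h) * V := by ring

theorem IsDampedMotion.norm_position_sub_lookahead_le (hu : IsDampedMotion f μ γ u v) {n : ℕ}
    (hx : ‖x (n + 1) - x n‖ ≤ h * V) (hv : ∀ t ∈ Ici 0, ‖v t‖ ≤ V) (hh : 0 ≤ h) (a : ℝ)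
    {s : ℝ} (hs : s ∈ Ico (n * h) (n * h + h)) :
    ‖u s - (x (n + 1) + a • (x (n + 1) - x n))‖
      ≤ ‖u (n * h) - x n‖ + (|1 + a| + 1) * (h * V) := by
  have hV : 0 ≤ V := (norm_nonneg _).trans (hv 0 self_mem_Ici)
  have hmove : ‖u s - u (n * h)‖ ≤ h * V := by
    refine (hu.norm_position_sub_le hv (by positivity) hs.1).trans ?_
    rw [mul_comm]
    gcongr
    linarith [hs.2]
  have hsplit : u s - (x (n + 1) + a • (x (n + 1) - x n))
      = (u s - u (n * h)) + (u (n * h) - x n) - (1 + a) • (x (n + 1) - x n) := by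
    module
  calc ‖u s - (x (n + 1) + a • (x (n + 1) - x n))‖
      ≤ ‖u s - u (n * h)‖ + ‖u (n * h) - x n‖ + |1 + a| * ‖x (n + 1) - x n‖ := by
        rw [hsplit, ← Real.norm_eq_abs, ← norm_smul]
        exact (norm_sub_le _ _).trans (add_le_add_left (norm_add_le _ _) _)
    _ ≤ h * V + ‖u (n * h) - x n‖ + |1 + a| * (h * V) := by gcongr
    _ = ‖u (n * h) - x n‖ + (|1 + a| + 1) * (h * V) := by ring

theorem norm_momentumDefect_succ_le (hf : LipschitzWith K f) (hx : IsMomentumSequence f lam a h x)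
    (hu : IsDampedMotion f μ (1 - lam) u v) (hh : 0 ≤ h) (hμ : 0 ≤ μ) (hlam : lam < 1)
    {n : ℕ} (hxn : ‖x (n + 1) - x n‖ ≤ h * V) (hv : ∀ t ∈ Ici 0, ‖v t‖ ≤ V) :
    ‖momentumDefect μ lam h u v x (n + 1)‖
      ≤ (1 + h * (K / (1 - lam))) * ‖momentumDefect μ lam h u v x n‖
        + h * (K * ((μ + h) * V / (1 - lam) + (|1 + a| + 1) * (h * V))) := by
  have hlam' : 0 < 1 - lam := sub_pos.2 hlam
  have hn : 0 ≤ n * h := by positivity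
  set e := ‖u (n * h) - x n‖
  set δ := ‖momentumDefect μ lam h u v x n‖
  have hforce : ∀ s ∈ Ico (n * h) (n * h + h), ‖f (u s) - f (x (n + 1) + a • (x (n + 1) - x n))‖
      ≤ K * (e + (|1 + a| + 1) * (h * V)) := fun s hs ↦
    (hf.norm_sub_le _ _).trans
      (by gcongr; exact hu.norm_position_sub_lookahead_le hxn hv hh a hs)
  have herror : e ≤ (δ + (μ + h) * V) / (1 - lam) :=
    (le_div_iff₀' hlam').2 (norm_sub_le_norm_momentumDefect hμ hlam hxn (hv _ hn))
  calc ‖momentumDefect μ lam h u v x (n + 1)‖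
      ≤ δ + K * (e + (|1 + a| + 1) * (h * V)) * h := by
        rw [hx.momentumDefect_succ]
        exact (norm_add_le _ _).trans
          (add_le_add_right (hu.norm_integratedMomentum_sub_sub_le hh hn hforce) _)
    _ ≤ δ + K * ((δ + (μ + h) * V) / (1 - lam) + (|1 + a| + 1) * (h * V)) * h := by gcongr
    _ = (1 + h * (K / (1 - lam))) * δ
        + h * (K * ((μ + h) * V / (1 - lam) + (|1 + a| + 1) * (h * V))) := by ring

theorem norm_position_sub_iterate_le (hfK : LipschitzWith K f)
    (hx : IsMomentumSequence f lam a h x) (hu : IsDampedMotion f μ (1 - lam) u v) (hh : 0 ≤ h)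
    (hμ : 0 ≤ μ) (hlam : lam < 1) (hf : ∀ z, ‖f z‖ ≤ (1 - |lam|) * V) (hv₀ : ‖v 0‖ ≤ V)
    (hux : u 0 = x 0) (n : ℕ) :
    (1 - lam) * ‖u (n * h) - x n‖
      ≤ ((μ + h) * V + n * h * (K * ((μ + h) * V / (1 - lam) + (|1 + a| + 1) * (h * V))))
          * Real.exp (n * h * (K / (1 - lam))) + (μ + h) * V := by
  have hlam' : 0 < 1 - lam := sub_pos.2 hlam
  have hV : 0 ≤ V := (norm_nonneg _).trans hv₀
  have hspeed := hx.norm_succ_sub_le hh hV hf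
  have hv (t : ℝ) (ht : t ∈ Ici 0) : ‖v t‖ ≤ V :=
    hu.norm_velocity_le hμ hlam' (fun z ↦ (hf z).trans (by gcongr; exact le_abs_self lam)) hv₀ ht
  have hrate : 0 ≤ h * (K / (1 - lam)) := by positivity
  have hlocal : 0 ≤ h * (K * ((μ + h) * V / (1 - lam) + (|1 + a| + 1) * (h * V))) := by positivity
  have hgronwall := discrete_gronwall (n₀ := 0) (u := fun k ↦ ‖momentumDefect μ lam h u v x k‖)
    (norm_nonneg _) (fun k _ ↦ norm_momentumDefect_succ_le hfK hx hu hh hμ hlam (hspeed k) hv)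
    (fun _ _ ↦ hrate) (fun _ _ ↦ hlocal) n.zero_le
  simp only [Finset.sum_const, Nat.card_Ico, tsub_zero, nsmul_eq_mul, ← mul_assoc (n : ℝ) h]
    at hgronwall
  have hn : 0 ≤ n * h := by positivity
  refine (norm_sub_le_norm_momentumDefect hμ hlam (hspeed n) (hv _ hn)).trans ?_
  gcongr
  refine hgronwall.trans ?_
  gcongr
  exact norm_momentumDefect_zero_le hμ hux (hspeed 0) hv₀

theorem momentum_converges_to_modified_equation_general (hfK : LipschitzWith K f) {B : ℝ}
    (hfB : ∀ z, ‖f z‖ ≤ B) (hlam : |lam| < 1) (a : ℝ) {α : ℝ} (hα : 0 ≤ α) (V₀ : ℝ) {T : ℝ}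
    (hT : 0 ≤ T) :
    ∃ C : ℝ, 0 < C ∧ ∀ h : ℝ, 0 < h → ∀ (u v : ℝ → E) (x : ℕ → E),
      IsDampedMotion f (h * α) (1 - lam) u v → IsMomentumSequence f lam a h x →
      ‖v 0‖ ≤ V₀ → u 0 = x 0 → ∀ n : ℕ, n * h ≤ T → ‖u (n * h) - x n‖ ≤ C * h := by
  have hlam₁ : lam < 1 := (le_abs_self lam).trans_lt hlam
  have hlam' : 0 < 1 - lam := sub_pos.2 hlam₁
  obtain ⟨V, hV, hV₀, hBV⟩ : ∃ V, 0 < V ∧ V₀ ≤ V ∧ B ≤ (1 - |lam|) * V := by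
    refine ⟨max 1 (max V₀ (B / (1 - |lam|))), lt_max_of_lt_left one_pos, by simp, ?_⟩
    exact (div_le_iff₀' (sub_pos.2 hlam)).1 (by simp)
  refine ⟨(((α + 1) * V + T * (K * ((α + 1) * V / (1 - lam) + (|1 + a| + 1) * V)))
    * Real.exp (T * (K / (1 - lam))) + (α + 1) * V) / (1 - lam), by positivity, ?_⟩
  intro h hh u v x hu hx hv hux n hn
  rw [div_mul_eq_mul_div, le_div_iff₀' hlam']
  calc (1 - lam) * ‖u (n * h) - x n‖
      ≤ ((h * α + h) * V
            + n * h * (K * ((h * α + h) * V / (1 - lam) + (|1 + a| + 1) * (h * V))))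
          * Real.exp (n * h * (K / (1 - lam))) + (h * α + h) * V :=
        norm_position_sub_iterate_le hfK hx hu hh.le (by positivity) hlam₁
          (fun z ↦ (hfB z).trans hBV) (hv.trans hV₀) hux n
    _ ≤ ((h * α + h) * V
            + T * (K * ((h * α + h) * V / (1 - lam) + (|1 + a| + 1) * (h * V))))
          * Real.exp (T * (K / (1 - lam))) + (h * α + h) * V := by gcongr
    _ = _ := by ring

end MomentumMethod

/-- Theorem 2 (convergence of momentum methods to the modified, damped-Hamiltonian equation):
with `α = (1 + λ - 2a(1-λ))/2 > 0` and `h ≤ (1-λ)²/(2αB₁)`, the momentum iterates stay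
within `C·h` of the solution of `hα ü + (1-λ) u̇ = -∇Φ(u)`, `u(0) = u₀`, `u̇(0) = u₀'`,
with `C = C(T)` independent of `h`. -/
theorem momentum_converges_to_modified_equation
    {d : ℕ} (Φ : EuclideanSpace ℝ (Fin d) → ℝ)
    (B₀ B₁ B₂ : ℝ) (hB₀ : 0 < B₀) (hB₁ : 0 < B₁) (hB₂ : 0 < B₂)
    (hΦ : ContDiff ℝ 3 Φ)
    (hbd₀ : ∀ x, ‖gradient Φ x‖ ≤ B₀)
    (hbd₁ : ∀ x, ‖fderiv ℝ (gradient Φ) x‖ ≤ B₁)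
    (hbd₂ : ∀ x, ‖fderiv ℝ (fderiv ℝ (gradient Φ)) x‖ ≤ B₂)
    (lam a : ℝ) (hlam : lam ∈ Set.Ioo (0:ℝ) 1) (ha : 0 ≤ a)
    (α : ℝ) (hα_def : α = (1 + lam - 2*a*(1-lam))/2) (hα : 0 < α)
    (u₀ u₀' : EuclideanSpace ℝ (Fin d)) (T : ℝ) (hT : 0 ≤ T) :
    ∃ C : ℝ, 0 < C ∧
      ∀ h : ℝ, 0 < h → h ≤ (1-lam)^2 / (2*α*B₁) →
      ∀ (u v : ℝ → EuclideanSpace ℝ (Fin d)) (uu : ℕ → EuclideanSpace ℝ (Fin d)),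
        ContDiff ℝ 4 u →
        (∀ t : ℝ, HasDerivAt u (v t) t) →
        (∀ t : ℝ, HasDerivAt v ((h*α)⁻¹ • (-(gradient Φ (u t)) - (1-lam) • v t)) t) →
        u 0 = u₀ → v 0 = u₀' →
        uu 0 = u₀ →
        uu 1 = uu 0 - h • gradient Φ (uu 0) →
        (∀ n : ℕ, uu (n+2) = uu (n+1) + lam • (uu (n+1) - uu n)
            - h • gradient Φ (uu (n+1) + a • (uu (n+1) - uu n))) →
        ∀ n : ℕ, (n : ℝ) * h ≤ T → ‖u ((n : ℝ) * h) - uu n‖ ≤ C * h := by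
  obtain ⟨C, hC, herror⟩ := momentum_converges_to_modified_equation_general
    (lipschitzWith_gradient_of_norm_fderiv_le (K := ⟨B₁, hB₁.le⟩) (hΦ.of_le (by norm_num)) hbd₁).neg
    (fun x ↦ (norm_neg (gradient Φ x)).trans_le (hbd₀ x))
    (abs_lt.2 ⟨by linarith [hlam.1], hlam.2⟩) a hα.le ‖u₀'‖ hT
  refine ⟨C, hC, fun h hh _ u v uu _ hu hv hu₀ hv₀ huu₀ huu₁ huu ↦ ?_⟩
  exact herror h hh u v uu (.of_hasDerivAt (by positivity) hu hv)
    ⟨by simpa [sub_eq_add_neg] using huu₁, fun n ↦ by simpa [sub_eq_add_neg] using huu n⟩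
    (congrArg norm hv₀).le (hu₀.trans huu₀.symm)
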